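/- Let k be a natural number. There exists an s-extremal singly even self-dual [24k+8, 12k+4, 4k+2] code if and only if there exists a doubly even self-dual [24k+8, 12k+4, 4k+4] code whose covering radius equals 4k+2. -/

import Mathlib

open Finset

/-- Hamming weight of a binary vector. -/
def wt {n : ℕ} (x : Fin n → ZMod 2) : ℕ := hammingNorm x

/-- The dual of a set of binary vectors with respect to the standard inner product. -/
def dualSet {n : ℕ} (C : Set (Fin n → ZMod 2)) : Set (Fin n → ZMod 2) :=
  {x | ∀ y ∈ C, ∑ i, x i * y i = 0}

/-- A binary linear code is self-dual if it equals its dual code. -/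
def IsSelfDual {n : ℕ} (C : Submodule (ZMod 2) (Fin n → ZMod 2)) : Prop :=
  (C : Set (Fin n → ZMod 2)) = dualSet (C : Set (Fin n → ZMod 2))

/-- A self-dual code is singly even if some codeword has weight not divisible by 4. -/
def IsSinglyEvenSelfDual {n : ℕ} (C : Submodule (ZMod 2) (Fin n → ZMod 2)) : Prop :=
  IsSelfDual C ∧ ∃ x ∈ C, ¬ (4 ∣ wt x)

/-- The doubly even subcode `C₀` of `C` (as a set): codewords of weight ≡ 0 (mod 4). -/
def evenSub {n : ℕ} (C : Submodule (ZMod 2) (Fin n → ZMod 2)) : Set (Fin n → ZMod 2) :=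
  {x | x ∈ C ∧ 4 ∣ wt x}

/-- The shadow `S = C₀^⊥ \ C` of a singly even self-dual code. -/
def shadow {n : ℕ} (C : Submodule (ZMod 2) (Fin n → ZMod 2)) : Set (Fin n → ZMod 2) :=
  dualSet (evenSub C) \ (C : Set (Fin n → ZMod 2))

/-- The minimum (nonzero) weight of a set of vectors. -/
noncomputable def minWtSet {n : ℕ} (S : Set (Fin n → ZMod 2)) : ℕ :=
  sInf {w | ∃ x ∈ S, x ≠ 0 ∧ wt x = w}

/-- The minimum weight of a code. -/
noncomputable def minWt {n : ℕ} (C : Submodule (ZMod 2) (Fin n → ZMod 2)) : ℕ :=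
  minWtSet (C : Set (Fin n → ZMod 2))

/-- A singly even self-dual code of length `n` is s-extremal if
`d(S) = n/2 + 4 - 2 d(C)`. -/
def IsSExtremal {n : ℕ} (C : Submodule (ZMod 2) (Fin n → ZMod 2)) : Prop :=
  IsSinglyEvenSelfDual C ∧
    (minWtSet (shadow C) : ℤ) = ((n / 2 : ℕ) : ℤ) + 4 - 2 * (minWt C : ℤ)

/-- Two codes are equivalent if one is obtained from the other by permuting coordinates. -/
def CodeEquiv {n : ℕ} (C D : Submodule (ZMod 2) (Fin n → ZMod 2)) : Prop :=
  ∃ σ : Equiv.Perm (Fin n),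
    Submodule.map (LinearMap.funLeft (ZMod 2) (ZMod 2) σ) C = D

/-- The neighbor `C₀ ∪ (t + C₀)` of `C` obtained from a shadow vector `t`:
the span of the doubly even subcode together with `t`. -/
def neighborCode {n : ℕ} (C : Submodule (ZMod 2) (Fin n → ZMod 2))
    (t : Fin n → ZMod 2) : Submodule (ZMod 2) (Fin n → ZMod 2) :=
  Submodule.span (ZMod 2) (evenSub C ∪ {t})

/-- The covering radius of a code: the maximum over all vectors `x` of the distance
from `x` to the code. -/
noncomputable def coveringRadius {n : ℕ} (S : Set (Fin n → ZMod 2)) : ℕ :=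
  sSup (Set.range fun x : Fin n → ZMod 2 => sInf {d | ∃ c ∈ S, hammingDist x c = d})

/-! Both directions pass to a neighbor. From `C` take `D = C₀ ∪ (t + C₀)` with `t` a shadow vector
of minimum weight `4k + 4`; from `D` take `C = D₀ ∪ (x + D₀)` with `x` a coset leader of weight
`4k + 2` and `D₀` the subcode of `D` orthogonal to `x`.

In the first case the nonzero weights of `D` are among `4k + 4, 4k + 8, …, 20k + 4, 24k + 8`, so
Delsarte's bound gives covering radius at most `4k + 2`, while the words of `C \ D` are at distance
at least `4k + 2` from `D`.

In the second case the point is that the shadow of `C` has a vector of weight exactly `4k + 4`,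
namely a minimum weight word `y` of `D` with `x · y = 1`. Compare the MacWilliams identities of `D`
and `x + D` at the arguments `1 + X` and `1 - X`, multiply by the kernel
`K = (1 - X) ^ (-4) * (1 - X ^ 4) ^ (-(4k + 1))`, and take the coefficient of `X ^ (4k)`. Since
`K` has positive coefficients, some `y` with `x · y = 1` must contribute. It is neither `0` nor the
all-one word, and words of weight strictly between `4k + 4` and `20k + 8` contribute residues that
vanish.
-/

section Weight

variable {n : ℕ} (x y : Fin n → ZMod 2)

theorem wt_zero : wt (0 : Fin n → ZMod 2) = 0 := hammingNorm_zero

theorem wt_le : wt x ≤ n := by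
  simpa [wt] using hammingNorm_le_card_fintype (x := x)

theorem wt_eq_sum_val : wt x = ∑ i, (x i).val := by
  have val_eq : ∀ a : ZMod 2, (if a ≠ 0 then 1 else 0) = a.val := by decide
  simp only [wt, hammingNorm, card_filter, val_eq]

theorem wt_one : wt (1 : Fin n → ZMod 2) = n := by
  simp [wt_eq_sum_val, ZMod.val_one]

theorem wt_add_add_two_mul_wt_mul : wt (x + y) + 2 * wt (x * y) = wt x + wt y := by
  have val_add : ∀ a b : ZMod 2, (a + b).val + 2 * (a * b).val = a.val + b.val := by decide
  simp only [wt_eq_sum_val, mul_sum, ← sum_add_distrib, Pi.add_apply, Pi.mul_apply, val_add]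

theorem wt_add_one_add_wt : wt (x + 1) + wt x = n := by
  have val_add : ∀ a : ZMod 2, (a + 1).val + a.val = 1 := by decide
  simp [wt_eq_sum_val, ← sum_add_distrib, val_add]

theorem natCast_wt_mul : (wt (x * y) : ZMod 2) = x ⬝ᵥ y := by
  simp [wt_eq_sum_val, dotProduct]

theorem wt_add_modEq : wt (x + y) ≡ wt x + wt y + 2 * (x ⬝ᵥ y).val [MOD 4] := by
  have h := wt_add_add_two_mul_wt_mul x y
  rw [← natCast_wt_mul, ZMod.val_natCast, Nat.ModEq]
  lia

theorem dotProduct_self_eq_zero_iff_two_dvd_wt : x ⬝ᵥ x = 0 ↔ 2 ∣ wt x := by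
  have mul_self : x * x = x := funext fun i => by
    have h : ∀ a : ZMod 2, a * a = a := by decide
    exact h (x i)
  rw [← natCast_wt_mul, mul_self, ZMod.natCast_eq_zero_iff]

theorem dotProduct_one_eq_zero_iff_two_dvd_wt : x ⬝ᵥ 1 = 0 ↔ 2 ∣ wt x := by
  rw [← natCast_wt_mul, mul_one, ZMod.natCast_eq_zero_iff]

theorem wt_eq_zero_iff : wt x = 0 ↔ x = 0 := hammingNorm_eq_zero

theorem hammingDist_eq_wt_add : hammingDist x y = wt (x + y) := by
  rw [hammingDist_eq_hammingNorm, ZModModule.neg_eq_self, wt]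

end Weight

section DualCode

variable {K ι : Type*} [Field K] [Fintype ι] (C D : Submodule K (ι → K)) (x : ι → K)

/-- The dual of a linear code as a linear code, over any field; for binary codes it is `dualSet`. -/
def dualCode : Submodule K (ι → K) :=
  LinearMap.BilinForm.orthogonal (dotProductBilin K K) C

variable {C x} in
theorem mem_dualCode : x ∈ dualCode C ↔ ∀ c ∈ C, c ⬝ᵥ x = 0 := Iff.rfl

theorem isRefl_dotProductBilin :
    LinearMap.BilinForm.IsRefl (dotProductBilin K K : LinearMap.BilinForm K (ι → K)) :=
  fun x y h => by simpa [dotProduct_comm] using h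

theorem nondegenerate_dotProductBilin :
    (dotProductBilin K K : LinearMap.BilinForm K (ι → K)).Nondegenerate :=
  ⟨fun x => dotProduct_eq_zero x,
    fun x h => dotProduct_eq_zero x fun w => by simpa [dotProduct_comm] using h w⟩

theorem dualCode_dualCode : dualCode (dualCode C) = C :=
  LinearMap.BilinForm.orthogonal_orthogonal nondegenerate_dotProductBilin isRefl_dotProductBilin C

theorem finrank_dualCode_add_finrank :
    Module.finrank K (dualCode C) + Module.finrank K C = Fintype.card ι := by
  have h := Submodule.finrank_le C
  rw [dualCode, LinearMap.BilinForm.finrank_orthogonal nondegenerate_dotProductBilin,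
    Nat.sub_add_cancel h, Module.finrank_fintype_fun_eq_card]

theorem dualCode_sup : dualCode (C ⊔ D) = dualCode C ⊓ dualCode D := by
  refine le_antisymm (le_inf (LinearMap.BilinForm.orthogonal_le le_sup_left)
    (LinearMap.BilinForm.orthogonal_le le_sup_right)) ?_
  rintro z ⟨hC, hD⟩ w hw
  obtain ⟨c, hc, d, hd, rfl⟩ := Submodule.mem_sup.1 hw
  simp [hC c hc, hD d hd]

theorem dualCode_inf_dualCode : dualCode (C ⊓ dualCode D) = dualCode C ⊔ D := by
  rw [← dualCode_dualCode (dualCode C ⊔ D), dualCode_sup, dualCode_dualCode]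

variable {x} in
theorem mem_dualCode_span_singleton {c : ι → K} : c ∈ dualCode (K ∙ x) ↔ x ⬝ᵥ c = 0 := by
  refine ⟨fun h => h x (Submodule.mem_span_singleton_self x), fun h w hw => ?_⟩
  obtain ⟨a, rfl⟩ := Submodule.mem_span_singleton.1 hw
  simp [h]

/-- The neighbor of `C` obtained from `x`: the words of `C + ⟨x⟩` orthogonal to `x`. Unlike
`neighborCode`, which depends on the weights in `C`, it is also the right notion for doubly even
`C`. -/
def neighbor : Submodule K (ι → K) :=
  (C ⊔ K ∙ x) ⊓ dualCode (K ∙ x)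

variable {C x} in
theorem dualCode_neighbor (hC : dualCode C = C) (hx : x ⬝ᵥ x = 0) :
    dualCode (neighbor C x) = neighbor C x := by
  have x_le : K ∙ x ≤ dualCode (K ∙ x) := by
    rwa [Submodule.span_singleton_le_iff_mem, mem_dualCode_span_singleton]
  rw [neighbor, dualCode_inf_dualCode, dualCode_sup, hC, sup_comm C, sup_comm (C ⊓ _),
    sup_inf_assoc_of_le C x_le]

end DualCode

section SelfDual

variable {n : ℕ} {C : Submodule (ZMod 2) (Fin n → ZMod 2)} {x z c : Fin n → ZMod 2}

theorem coe_dualCode : (dualCode C : Set (Fin n → ZMod 2)) = dualSet C := by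
  ext z
  simp [mem_dualCode, dualSet, dotProduct, mul_comm]

theorem isSelfDual_iff_dualCode_eq : IsSelfDual C ↔ dualCode C = C := by
  rw [IsSelfDual, ← coe_dualCode, SetLike.coe_set_eq, eq_comm]

theorem IsSelfDual.two_mul_finrank (hC : IsSelfDual C) : 2 * Module.finrank (ZMod 2) C = n := by
  have h := finrank_dualCode_add_finrank C
  rw [isSelfDual_iff_dualCode_eq.1 hC, Fintype.card_fin] at h
  lia

theorem IsSelfDual.dotProduct_eq_zero (hC : IsSelfDual C) (hx : x ∈ C) (hz : z ∈ C) :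
    x ⬝ᵥ z = 0 := by
  rw [← isSelfDual_iff_dualCode_eq.1 hC] at hz
  exact hz x hx

theorem IsSelfDual.two_dvd_wt (hC : IsSelfDual C) (hx : x ∈ C) : 2 ∣ wt x :=
  (dotProduct_self_eq_zero_iff_two_dvd_wt x).1 (hC.dotProduct_eq_zero hx hx)

theorem IsSelfDual.one_mem (hC : IsSelfDual C) : 1 ∈ C := by
  rw [← isSelfDual_iff_dualCode_eq.1 hC]
  exact fun c hc => (dotProduct_one_eq_zero_iff_two_dvd_wt c).2 (hC.two_dvd_wt hc)

theorem mem_sup_span_singleton_iff : z ∈ C ⊔ ZMod 2 ∙ x ↔ z ∈ C ∨ z + x ∈ C := by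
  constructor
  · intro hz
    obtain ⟨c, hc, w, hw, rfl⟩ := Submodule.mem_sup.1 hz
    obtain ⟨a, rfl⟩ := Submodule.mem_span_singleton.1 hw
    rcases eq_or_ne a 0 with rfl | ha
    · exact .inl (by simpa using hc)
    · obtain rfl : a = 1 := Fin.eq_one_of_ne_zero a ha
      exact .inr (by simpa [add_assoc, ZModModule.add_self] using hc)
  · rintro (hz | hz)
    · exact Submodule.mem_sup_left hz
    · exact Submodule.mem_sup.2 ⟨z + x, hz, x, Submodule.mem_span_singleton_self x,
        by rw [add_assoc, ZModModule.add_self, add_zero]⟩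

theorem mem_neighbor_iff : c ∈ neighbor C x ↔ (c ∈ C ∨ c + x ∈ C) ∧ x ⬝ᵥ c = 0 := by
  rw [neighbor, Submodule.mem_inf, mem_sup_span_singleton_iff, mem_dualCode_span_singleton]

theorem mem_neighbor_self (hx : 2 ∣ wt x) : x ∈ neighbor C x :=
  mem_neighbor_iff.2 ⟨.inr (by simp [ZModModule.add_self]),
    (dotProduct_self_eq_zero_iff_two_dvd_wt x).2 hx⟩

theorem IsSelfDual.neighbor (hC : IsSelfDual C) (hx : 2 ∣ wt x) : IsSelfDual (neighbor C x) :=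
  isSelfDual_iff_dualCode_eq.2 <| dualCode_neighbor (isSelfDual_iff_dualCode_eq.1 hC)
    ((dotProduct_self_eq_zero_iff_two_dvd_wt x).2 hx)

end SelfDual

section MacWilliams

variable {n : ℕ} {R : Type*} [CommRing R]

variable (R) in
/-- The sign character `a ↦ (-1) ^ a` of `𝔽₂`, with values in an arbitrary commutative ring. -/
def signChar : AddChar (ZMod 2) R :=
  AddChar.zmodChar 2 neg_one_sq

theorem signChar_one : signChar R 1 = -1 := by
  rw [signChar, AddChar.zmodChar_apply, ZMod.val_one, pow_one]

theorem map_signChar {S : Type*} [CommRing S] (f : R →+* S) (a : ZMod 2) :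
    f (signChar R a) = signChar S a := by
  simp [signChar, AddChar.zmodChar_apply]

theorem signChar_sum (f : Fin n → ZMod 2) : signChar R (∑ i, f i) = ∏ i, signChar R (f i) :=
  map_prod (signChar R).toMonoidHom (fun i => Multiplicative.ofAdd (f i)) univ

theorem pow_mul_pow_wt_eq_prod (z : Fin n → ZMod 2) (a b : R) :
    a ^ (n - wt z) * b ^ wt z = ∏ i, if z i = 0 then a else b := by
  have card_zeros : #{i | z i = 0} = n - wt z := by
    have h := card_filter_add_card_filter_not (s := univ) (fun i => z i = 0)
    rw [card_univ, Fintype.card_fin] at h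
    rw [wt, hammingNorm]
    lia
  rw [prod_ite, prod_const, prod_const, card_zeros, wt, hammingNorm]

theorem sum_signChar_mul_pow_wt (v : Fin n → ZMod 2) (a b : R) :
    ∑ z, signChar R (v ⬝ᵥ z) * (a ^ (n - wt z) * b ^ wt z) =
      (a + b) ^ (n - wt v) * (a - b) ^ wt v := by
  have factor : ∀ u : ZMod 2,
      ∑ s, signChar R (u * s) * (if s = 0 then a else b) = if u = 0 then a + b else a - b := by
    intro u
    have sum_eq : ∀ f : ZMod 2 → R, ∑ s, f s = f 0 + f 1 := Fin.sum_univ_two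
    rcases eq_or_ne u 0 with rfl | hu
    · simp [sum_eq]
    · obtain rfl : u = 1 := Fin.eq_one_of_ne_zero u hu
      simp [sum_eq, signChar_one, sub_eq_add_neg]
  simp_rw [pow_mul_pow_wt_eq_prod, dotProduct, signChar_sum, ← prod_mul_distrib, ← factor]
  rw [prod_univ_sum, Fintype.piFinset_univ]

variable (C : Submodule (ZMod 2) (Fin n → ZMod 2))

open Classical in
theorem sum_signChar_dotProduct (z : Fin n → ZMod 2) :
    ∑ c with c ∈ C, signChar R (c ⬝ᵥ z) = if z ∈ dualCode C then (#{c | c ∈ C} : R) else 0 := by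
  split_ifs with hz
  · have signChar_eq_one : ∀ c ∈ ({c | c ∈ C} : Finset _), signChar R (c ⬝ᵥ z) = 1 :=
      fun c hc => by rw [mem_dualCode.1 hz c (mem_filter.1 hc).2, AddChar.map_zero_eq_one]
    rw [sum_congr rfl signChar_eq_one, sum_const, nsmul_one]
  · obtain ⟨d, hd, hdz⟩ : ∃ d ∈ C, d ⬝ᵥ z = 1 := by
      obtain ⟨d, hd, hdz⟩ : ∃ d ∈ C, d ⬝ᵥ z ≠ 0 := by simpa [mem_dualCode] using hz
      exact ⟨d, hd, Fin.eq_one_of_ne_zero _ hdz⟩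
    refine sum_involution (fun c _ => c + d) ?_ ?_ ?_ ?_
    · intro c _
      rw [add_dotProduct, hdz, AddChar.map_add_eq_mul, signChar_one]
      ring
    · intro c _ _ hcd
      rw [add_eq_left.1 hcd, zero_dotProduct] at hdz
      exact zero_ne_one hdz
    · intro c hc
      simpa using C.add_mem (mem_filter.1 hc).2 hd
    · intro c _
      rw [add_assoc, ZModModule.add_self, add_zero]

open Classical in
theorem macWilliams_coset (x : Fin n → ZMod 2) (a b : R) :
    ∑ c with c ∈ C, (a + b) ^ (n - wt (x + c)) * (a - b) ^ wt (x + c) =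
      #{c | c ∈ C} *
        ∑ y with y ∈ dualCode C, signChar R (x ⬝ᵥ y) * (a ^ (n - wt y) * b ^ wt y) := by
  simp_rw [← sum_signChar_mul_pow_wt]
  rw [sum_comm, mul_sum, sum_filter]
  refine sum_congr rfl fun y _ => ?_
  simp_rw [add_dotProduct, AddChar.map_add_eq_mul, mul_assoc, mul_left_comm (signChar R (x ⬝ᵥ y))]
  rw [← sum_mul, sum_signChar_dotProduct, ite_zero_mul]

end MacWilliams

section MinWtAndCoveringRadius

variable {n : ℕ} {r m : ℕ}

theorem minWtSet_eq_iff {S : Set (Fin n → ZMod 2)} (hm : m ≠ 0) :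
    minWtSet S = m ↔ (∀ x ∈ S, x ≠ 0 → m ≤ wt x) ∧ ∃ x ∈ S, wt x = m := by
  constructor
  · rintro rfl
    obtain ⟨x, hxS, -, hx⟩ := Nat.sInf_mem (Nat.nonempty_of_sInf_eq_succ (Nat.succ_pred hm).symm)
    exact ⟨fun y hyS hy => Nat.sInf_le ⟨y, hyS, hy, rfl⟩, x, hxS, hx⟩
  · rintro ⟨hmin, x, hxS, rfl⟩
    rw [Ne, wt_eq_zero_iff] at hm
    refine IsLeast.csInf_eq ⟨⟨x, hxS, hm, rfl⟩, ?_⟩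
    rintro _ ⟨y, hyS, hy, rfl⟩
    exact hmin y hyS hy

variable {C : Submodule (ZMod 2) (Fin n → ZMod 2)}

theorem coveringRadius_le_iff :
    coveringRadius (C : Set (Fin n → ZMod 2)) ≤ r ↔ ∀ x, ∃ c ∈ C, wt (x + c) ≤ r := by
  rw [coveringRadius, csSup_le_iff (Set.finite_range _).bddAbove (Set.range_nonempty _),
    Set.forall_mem_range]
  refine forall_congr' fun x => ⟨fun h => ?_, fun ⟨c, hc, hxc⟩ => ?_⟩
  · have dists_nonempty :
        ({d | ∃ c ∈ (C : Set (Fin n → ZMod 2)), hammingDist x c = d} : Set ℕ).Nonempty :=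
      ⟨_, 0, C.zero_mem, rfl⟩
    obtain ⟨c, hc, hxc⟩ := Nat.sInf_mem dists_nonempty
    exact ⟨c, hc, by rwa [← hammingDist_eq_wt_add, hxc]⟩
  · exact le_trans (Nat.sInf_le ⟨c, hc, hammingDist_eq_wt_add x c⟩) hxc

theorem lt_coveringRadius_iff :
    r < coveringRadius (C : Set (Fin n → ZMod 2)) ↔ ∃ x, ∀ c ∈ C, r < wt (x + c) := by
  rw [← not_le, coveringRadius_le_iff]
  push Not
  rfl

theorem exists_coset_leader_of_coveringRadius_eq
    (hr : coveringRadius (C : Set (Fin n → ZMod 2)) = r) :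
    ∃ x, wt x = r ∧ ∀ c ∈ C, r ≤ wt (x + c) := by
  obtain ⟨x, hx⟩ : ∃ x, ∀ c ∈ C, r ≤ wt (x + c) := by
    rcases r with _ | r
    · exact ⟨0, fun _ _ => Nat.zero_le _⟩
    · exact lt_coveringRadius_iff.1 (hr ▸ r.lt_succ_self)
  obtain ⟨d, hd, hxd⟩ := coveringRadius_le_iff.1 hr.le x
  refine ⟨x + d, le_antisymm hxd (hx d hd), fun c hc => ?_⟩
  rw [add_assoc]
  exact hx _ (C.add_mem hd hc)

end MinWtAndCoveringRadius

section Delsarte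

open Polynomial

theorem sum_mul_prod_natCast_sub_eq_zero {R ι κ : Type*} [CommRing R] (s : Finset ι) (e : ι → ℕ)
    (L : Finset κ) (l : κ → R) (a : ι → R)
    (hdvd : (X - 1 : R[X]) ^ (#L + 1) ∣ ∑ y ∈ s, C (a y) * X ^ e y) :
    ∑ y ∈ s, a y * ∏ j ∈ L, ((e y : R) - l j) = 0 := by
  classical
  induction L using Finset.induction_on generalizing a with
  | empty =>
    obtain ⟨p, hp⟩ := hdvd
    simpa [eval_finsetSum] using congrArg (eval 1) hp
  | insert j L hj ih =>
    set P := ∑ y ∈ s, C (a y) * X ^ e y with hP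
    rw [card_insert_of_notMem hj] at hdvd
    have X_mul_derivative_X_pow (m : ℕ) :
        X * derivative (X ^ m : R[X]) = C (m : R) * X ^ m := by
      rcases m with _ | m
      · simp
      · rw [derivative_X_pow, Nat.add_sub_cancel]
        ring
    have euler : X * derivative P - C (l j) * P =
        ∑ y ∈ s, C (a y * ((e y : R) - l j)) * X ^ e y := by
      simp only [hP, derivative_sum, derivative_C_mul, mul_sum, ← sum_sub_distrib, C_mul, C_sub]
      refine sum_congr rfl fun y _ => ?_
      linear_combination C (a y) * X_mul_derivative_X_pow (e y)
    have hdvd' : (X - 1 : R[X]) ^ (#L + 1) ∣ X * derivative P - C (l j) * P := by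
      refine dvd_sub (Dvd.dvd.mul_left ?_ _) (Dvd.dvd.mul_left ?_ _)
      · simpa using pow_sub_one_dvd_derivative_of_pow_dvd hdvd
      · exact (pow_dvd_pow _ (Nat.le_succ _)).trans hdvd
    rw [euler] at hdvd'
    simpa only [prod_insert hj, mul_assoc] using ih _ hdvd'

variable {n : ℕ} (C : Submodule (ZMod 2) (Fin n → ZMod 2))

open Classical in
/-- Delsarte's external distance of `C`: the number of nonzero weights of the dual code. -/
noncomputable def externalDistance : ℕ :=
  #(image wt {y | y ∈ dualCode C ∧ y ≠ 0})

/-- Delsarte's bound: if the coset `x + C` had minimum weight greater than the number of nonzero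
dual weights, then annihilating all these weights in its MacWilliams identity by Euler operators
`X d/dX - w` would leave only the contribution of the zero word, which does not vanish. -/
theorem coveringRadius_le_externalDistance :
    coveringRadius (C : Set (Fin n → ZMod 2)) ≤ externalDistance C := by
  classical
  rw [coveringRadius_le_iff]
  by_contra! ⟨x, hx⟩
  set L := image wt ({y | y ∈ dualCode C ∧ y ≠ 0} : Finset (Fin n → ZMod 2))
  change ∀ c ∈ C, #L < _ at hx
  let a : (Fin n → ZMod 2) → ℤ := fun y => #{c | c ∈ C} * signChar ℤ (x ⬝ᵥ y)
  have hdvd : (X - 1 : ℤ[X]) ^ (#L + 1) ∣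
      ∑ y with y ∈ dualCode C, Polynomial.C (a y) * X ^ wt y := by
    have h := macWilliams_coset C x (1 : ℤ[X]) X
    simp only [mul_sum, one_pow, one_mul, ← mul_assoc] at h
    simp only [a, map_mul, map_natCast, map_signChar, ← h]
    refine dvd_sum fun c hc => Dvd.dvd.mul_left ?_ _
    exact (pow_dvd_pow _ (hx c (mem_filter.1 hc).2)).trans
      (pow_dvd_pow_of_dvd ((dvd_sub_comm).1 dvd_rfl) _)
  have eval_zero := sum_mul_prod_natCast_sub_eq_zero _ wt L (fun l => (l : ℤ)) a hdvd
  rw [sum_eq_single_of_mem 0 (by simp) ?_] at eval_zero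
  · have card_ne_zero : (#{c | c ∈ C} : ℤ) ≠ 0 :=
      Nat.cast_ne_zero.2 (card_ne_zero_of_mem (mem_filter.2 ⟨mem_univ _, C.zero_mem⟩))
    have weights_ne_zero : ∀ w ∈ L, (0 : ℤ) - w ≠ 0 := by
      intro w hw
      obtain ⟨y, hy, rfl⟩ := mem_image.1 hw
      simpa [wt_eq_zero_iff] using (mem_filter.1 hy).2.2
    refine mul_ne_zero ?_ (prod_ne_zero_iff.2 weights_ne_zero) (by simpa [wt_zero] using eval_zero)
    simpa [a] using card_ne_zero
  · intro y hy hy0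
    rw [prod_eq_zero (i := wt y), mul_zero]
    · exact mem_image_of_mem wt (by simpa [hy0] using hy)
    · exact sub_self _

end Delsarte

section LinearProgramming

open PowerSeries

variable {n : ℕ} (C : Submodule (ZMod 2) (Fin n → ZMod 2)) (x : Fin n → ZMod 2) (K : ℤ⟦X⟧)
  (m : ℕ)

open Classical in
theorem two_pow_mul_sum_coeff_X_pow_wt_mul :
    2 ^ n * ∑ c with c ∈ C, coeff m (X ^ wt (x + c) * K) =
      #{c | c ∈ C} * ∑ y with y ∈ dualCode C,
        signChar ℤ (x ⬝ᵥ y) * coeff m ((1 + X) ^ (n - wt y) * (1 - X) ^ wt y * K) := by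
  have scale (w : ℕ) (hw : w ≤ n) :
      (1 + X + (1 - X) : ℤ⟦X⟧) ^ (n - w) * (1 + X - (1 - X)) ^ w =
        PowerSeries.C (2 ^ n) * X ^ w := by
    rw [← Nat.sub_add_cancel hw, pow_add, map_mul, map_pow, map_pow, map_ofNat, Nat.add_sub_cancel]
    ring
  have h := macWilliams_coset C x (1 + X : ℤ⟦X⟧) (1 - X)
  simp only [scale _ (wt_le _), ← map_signChar (PowerSeries.C (R := ℤ)), ← mul_sum] at h
  rw [← map_natCast (PowerSeries.C (R := ℤ))] at h
  simpa only [mul_assoc, sum_mul, coeff_C_mul, map_sum] using congrArg (fun f => coeff m (f * K)) h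

variable {C x K m} in
theorem exists_mem_dualCode_coeff_ne_zero (hK : coeff m K ≠ 0)
    (hC : ∀ c ∈ C, c ≠ 0 → m < wt c) (hx : ∀ c ∈ C, m < wt (x + c)) :
    ∃ y ∈ dualCode C, x ⬝ᵥ y = 1 ∧
      coeff m ((1 + X) ^ (n - wt y) * (1 - X) ^ wt y * K) ≠ 0 := by
  classical
  have code_sum : ∑ c with c ∈ C, coeff m (X ^ wt (0 + c) * K) = coeff m K := by
    rw [sum_eq_single_of_mem 0 (by simp), add_zero, wt_zero, pow_zero, one_mul]
    intro c hc hc0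
    rw [zero_add, coeff_X_pow_mul', if_neg (hC c (mem_filter.1 hc).2 hc0).not_ge]
  have coset_sum : ∑ c with c ∈ C, coeff m (X ^ wt (x + c) * K) = 0 :=
    sum_eq_zero fun c hc => by
      rw [coeff_X_pow_mul', if_neg (hx c (mem_filter.1 hc).2).not_ge]
  have code_identity := two_pow_mul_sum_coeff_X_pow_wt_mul C 0 K m
  have coset_identity := two_pow_mul_sum_coeff_X_pow_wt_mul C x K m
  rw [code_sum] at code_identity
  rw [coset_sum, mul_zero] at coset_identity
  by_contra! hzero
  refine mul_ne_zero (pow_ne_zero n two_ne_zero) hK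
    (code_identity.trans (.trans (congrArg _ (sum_congr rfl fun y hy => ?_)) coset_identity.symm))
  rcases eq_or_ne (x ⬝ᵥ y) 0 with hxy | hxy
  · rw [hxy, zero_dotProduct]
  · rw [hzero y (mem_filter.1 hy).2 (Fin.eq_one_of_ne_zero _ hxy), mul_zero, mul_zero]

end LinearProgramming

section Residue

open PowerSeries

variable {R : Type*} [CommRing R]

theorem coeff_X_mul_derivative (f : R⟦X⟧) (m : ℕ) :
    coeff m (X * derivative R f) = m * coeff m f := by
  rcases m with _ | m
  · simp
  · rw [coeff_succ_X_mul, coeff_derivative]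
    push_cast
    ring

theorem coeff_pow_mul_sub_X_mul_derivative [IsAddTorsionFree R] (W : R⟦X⟧) (m : ℕ) :
    coeff (m + 1) (W ^ m * (W - X * d⁄dX R W)) = 0 := by
  have log_derivative : (m + 1) • (W ^ m * (W - X * d⁄dX R W)) =
      (m + 1) • W ^ (m + 1) - X * d⁄dX R (W ^ (m + 1)) := by
    rw [derivative_pow, Nat.add_sub_cancel, nsmul_eq_mul, nsmul_eq_mul]
    ring
  have coeff_nsmul := congrArg (coeff (m + 1)) log_derivative
  rw [map_sub, coeff_X_mul_derivative, map_nsmul, map_nsmul, nsmul_eq_mul (m + 1) (coeff _ (W ^ _)),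
    sub_self] at coeff_nsmul
  exact (nsmul_eq_zero_iff_right m.succ_ne_zero).1 coeff_nsmul

theorem sub_X_mul_derivative_one_sub_X_pow_four_mul {q : R⟦X⟧} (hq : (1 + X ^ 2) * q = 1) :
    (1 - X) ^ 4 * q - X * d⁄dX R ((1 - X) ^ 4 * q) = (1 + X) ^ 3 * (1 - X) ^ 3 * q ^ 2 := by
  have derivative_q : d⁄dX R q = -(2 * X * q ^ 2) := by
    have h := congrArg (d⁄dX R) hq
    simp only [Derivation.leibniz, map_add, smul_eq_mul, derivative_pow, derivative_X,
      derivative_one, zero_add] at h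
    linear_combination q * h - d⁄dX R q * hq
  have derivative_pow_four : d⁄dX R ((1 - X) ^ 4 : R⟦X⟧) = -(4 * (1 - X) ^ 3) := by
    rw [derivative_pow, map_sub, derivative_one, derivative_X]
    ring
  rw [Derivation.leibniz, smul_eq_mul, smul_eq_mul, derivative_q, derivative_pow_four]
  linear_combination (1 - X) ^ 3 * (1 + 3 * X) * q * (-hq)

/-- In terms of `1 + z = ((1 + X) / (1 - X)) ^ 4` this is the vanishing of the residue of
`(1 + z) ^ i * z ^ (-(i + j + 2)) dz`; the recurrence below is `(1 + z) ^ (i + 1) =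
(1 + z) ^ i + z * (1 + z) ^ i`, cleared of denominators by `(1 + X) ^ 4 - (1 - X) ^ 4 =
8 * X * (1 + X ^ 2)`. -/
theorem coeff_one_add_X_pow_mul_one_sub_X_pow_mul_eq_zero [IsAddTorsionFree R] {q : R⟦X⟧}
    (hq : (1 + X ^ 2) * q = 1) (i j : ℕ) :
    coeff (i + j + 1) ((1 + X) ^ (4 * i + 3) * (1 - X) ^ (4 * j + 3) * q ^ (i + j + 2)) = 0 := by
  induction i generalizing j with
  | zero =>
    have h := coeff_pow_mul_sub_X_mul_derivative ((1 - X) ^ 4 * q) j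
    rw [sub_X_mul_derivative_one_sub_X_pow_four_mul hq, mul_pow, ← pow_mul] at h
    rw [zero_add, ← h]
    congr 1
    ring
  | succ i ih =>
    have recurrence : (1 + X) ^ (4 * (i + 1) + 3) * (1 - X) ^ (4 * j + 3) * q ^ (i + 1 + j + 2) =
        (1 + X) ^ (4 * i + 3) * (1 - X) ^ (4 * (j + 1) + 3) * q ^ (i + (j + 1) + 2) +
        X * (8 • ((1 + X) ^ (4 * i + 3) * (1 - X) ^ (4 * j + 3) * q ^ (i + j + 2))) := by
      rw [nsmul_eq_mul]
      linear_combination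
        8 * X * (1 + X) ^ (4 * i + 3) * (1 - X) ^ (4 * j + 3) * q ^ (i + j + 2) * hq
    rw [recurrence, map_add, coeff_succ_X_mul, map_nsmul, show i + 1 + j = i + j + 1 by ring, ih j,
      nsmul_zero, add_zero]
    exact ih (j + 1)

end Residue

section Kernel

open PowerSeries

variable {R : Type*} [CommRing R]

section Positivity

variable [LinearOrder R] [IsStrictOrderedRing R] {d : ℕ}

theorem coeff_pos_of_one_sub_X_pow_mul (hd : d ≠ 0) {f : R⟦X⟧}
    (hf : ∀ m, 0 < coeff m ((1 - X ^ d) * f)) (m : ℕ) : 0 < coeff m f := by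
  induction m using Nat.strong_induction_on with
  | _ m ih =>
    have h := hf m
    rw [sub_mul, one_mul, map_sub, coeff_X_pow_mul'] at h
    split_ifs at h with hdm
    · linarith [ih (m - d) (by lia)]
    · simpa using h

theorem exists_mul_one_sub_X_pow_pow_mul_eq_one (hd : d ≠ 0) (e : ℕ) {f K : R⟦X⟧}
    (hfK : f * K = 1) (hK : ∀ m, 0 < coeff m K) :
    ∃ K' : R⟦X⟧, f * (1 - X ^ d) ^ e * K' = 1 ∧ ∀ m, 0 < coeff m K' := by
  induction e with
  | zero => exact ⟨K, by rw [pow_zero, mul_one, hfK], hK⟩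
  | succ e ih =>
    obtain ⟨K', hfK', hK'⟩ := ih
    obtain ⟨v, hv⟩ : ∃ v : R⟦X⟧, (1 - X ^ d) * v = 1 :=
      (isUnit_iff_constantCoeff.2 (by simp [hd])).exists_right_inv
    have cancel : (1 - X ^ d) * (v * K') = K' := by rw [← mul_assoc, hv, one_mul]
    refine ⟨v * K', ?_, coeff_pos_of_one_sub_X_pow_mul hd (by rwa [cancel])⟩
    rw [pow_succ, ← mul_assoc f, mul_assoc (f * _), cancel, hfK']

theorem exists_kernel_inverse (N : ℕ) :
    ∃ K : R⟦X⟧, (1 - X) ^ 4 * (1 - X ^ 4) ^ (N + 1) * K = 1 ∧ ∀ m, 0 < coeff m K := by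
  have geometric : (1 - X : R⟦X⟧) * PowerSeries.mk 1 = 1 := by
    rw [mul_comm, mk_one_mul_one_sub_eq_one]
  obtain ⟨K, hK, K_pos⟩ :=
    exists_mul_one_sub_X_pow_pow_mul_eq_one one_ne_zero 3 geometric (by simp)
  obtain ⟨K', hK', K'_pos⟩ :=
    exists_mul_one_sub_X_pow_pow_mul_eq_one four_ne_zero (N + 1) hK K_pos
  exact ⟨K', by rwa [pow_one, ← pow_succ'] at hK', K'_pos⟩

end Positivity

theorem coeff_one_add_X_pow_mul_one_sub_X_pow_mul_kernel_eq_zero [IsAddTorsionFree R]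
    {i j N : ℕ} (hN : i + j + 1 = N) {K : R⟦X⟧}
    (hK : (1 - X) ^ 4 * (1 - X ^ 4) ^ (N + 1) * K = 1) :
    coeff N ((1 + X) ^ (4 * i + N + 4) * (1 - X) ^ (4 * j + N + 8) * K) = 0 := by
  obtain ⟨q, hq⟩ : ∃ q : R⟦X⟧, (1 + X ^ 2) * q = 1 :=
    (isUnit_iff_constantCoeff.2 (by simp)).exists_right_inv
  have factor : (1 - X) * (1 + X) = (1 - X ^ 4) * q := by
    linear_combination (X ^ 2 - 1) * hq
  have kernel : (1 - X) ^ 4 * ((1 - X) * (1 + X)) ^ (N + 1) * K = q ^ (N + 1) := by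
    rw [factor, mul_pow]
    linear_combination q ^ (N + 1) * hK
  have regroup (u v : R⟦X⟧) : v ^ (4 * i + N + 4) * u ^ (4 * j + N + 8) * K =
      v ^ (4 * i + 3) * u ^ (4 * j + 3) * (u ^ 4 * (u * v) ^ (N + 1) * K) := by
    ring
  rw [regroup, kernel, ← hN]
  exact coeff_one_add_X_pow_mul_one_sub_X_pow_mul_eq_zero hq i j

end Kernel

section Shadow

variable {n : ℕ} {C D : Submodule (ZMod 2) (Fin n → ZMod 2)} {t x y z : Fin n → ZMod 2}

theorem mem_shadow_iff : z ∈ shadow C ↔ z ∈ dualSet (evenSub C) ∧ z ∉ C := Iff.rfl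

theorem four_dvd_wt_add (hx : 4 ∣ wt x) (hy : 4 ∣ wt y) (hxy : x ⬝ᵥ y = 0) : 4 ∣ wt (x + y) := by
  have h := wt_add_modEq x y
  rw [hxy, ZMod.val_zero, Nat.ModEq] at h
  lia

theorem IsSelfDual.dualSet_inf_dualCode_span (hC : IsSelfDual C) :
    dualSet ((C ⊓ dualCode (ZMod 2 ∙ x) : Submodule _ _) : Set (Fin n → ZMod 2)) =
      (C ⊔ ZMod 2 ∙ x : Submodule (ZMod 2) (Fin n → ZMod 2)) := by
  rw [← coe_dualCode, dualCode_inf_dualCode, isSelfDual_iff_dualCode_eq.1 hC]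

theorem four_dvd_wt_iff_of_mem_shadow (hC : IsSelfDual C) (ht : t ∈ shadow C) (hy : y ∈ C) :
    4 ∣ wt y ↔ t ⬝ᵥ y = 0 := by
  obtain ⟨ht_dual, htC⟩ := ht
  refine ⟨fun h4 => ht_dual y ⟨hy, h4⟩, fun hty => ?_⟩
  obtain ⟨w, hw, htw⟩ : ∃ w ∈ C, t ⬝ᵥ w ≠ 0 := by
    contrapose! htC
    rw [SetLike.mem_coe, ← isSelfDual_iff_dualCode_eq.1 hC]
    exact fun c hc => (dotProduct_comm c t).trans (htC c hc)
  by_contra h4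
  have hw4 : ¬ 4 ∣ wt w := fun h => htw (ht_dual w ⟨hw, h⟩)
  have hyw4 : 4 ∣ wt (y + w) := by
    have h := wt_add_modEq y w
    rw [hC.dotProduct_eq_zero hy hw, ZMod.val_zero, Nat.ModEq] at h
    have := hC.two_dvd_wt hy
    have := hC.two_dvd_wt hw
    lia
  have htyw : t ⬝ᵥ (y + w) = 0 := ht_dual _ ⟨C.add_mem hy hw, hyw4⟩
  rw [dotProduct_add, hty, zero_add] at htyw
  exact htw htyw

theorem mem_shadow_iff_add_mem (hC : IsSelfDual C) (ht : t ∈ shadow C) :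
    z ∈ shadow C ↔ z + t ∈ C := by
  have evenSub_eq : evenSub C = (C ⊓ dualCode (ZMod 2 ∙ t) : Submodule _ _) := by
    ext y
    simp only [evenSub, Set.mem_ofPred_eq, SetLike.mem_coe, Submodule.mem_inf,
      mem_dualCode_span_singleton]
    exact and_congr_right fun hy => four_dvd_wt_iff_of_mem_shadow hC ht hy
  rw [mem_shadow_iff, evenSub_eq, hC.dualSet_inf_dualCode_span, SetLike.mem_coe,
    mem_sup_span_singleton_iff]
  refine ⟨fun h => h.1.resolve_left h.2, fun h => ⟨.inr h, fun hz => ht.2 ?_⟩⟩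
  simpa using (C.add_mem_iff_right hz).1 h

theorem four_dvd_wt_of_mem_neighbor_shadow (hC : IsSelfDual C) (ht : t ∈ shadow C)
    (ht4 : 4 ∣ wt t) (hy : y ∈ neighbor C t) : 4 ∣ wt y := by
  obtain ⟨hyC | hyC, hty⟩ := mem_neighbor_iff.1 hy
  · exact (four_dvd_wt_iff_of_mem_shadow hC ht hyC).2 hty
  · have htt : t ⬝ᵥ t = 0 :=
      (dotProduct_self_eq_zero_iff_two_dvd_wt t).2 ((by lia : 2 ∣ 4).trans ht4)
    have htyt : t ⬝ᵥ (y + t) = 0 := by rw [dotProduct_add, hty, htt, add_zero]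
    have h := four_dvd_wt_add ((four_dvd_wt_iff_of_mem_shadow hC ht hyC).2 htyt) ht4
      ((dotProduct_comm _ _).trans htyt)
    rwa [add_assoc, ZModModule.add_self, add_zero] at h

theorem wt_modEq_of_add_mem (hD : ∀ c ∈ D, 4 ∣ wt c) (hx : wt x % 4 = 2) (hz : z + x ∈ D) :
    wt z ≡ 2 + 2 * (x ⬝ᵥ z).val [MOD 4] := by
  have hxx : x ⬝ᵥ x = 0 := (dotProduct_self_eq_zero_iff_two_dvd_wt x).2 (by lia)
  have h := wt_add_modEq (z + x) x
  rw [add_assoc, ZModModule.add_self, add_zero, add_dotProduct, hxx, add_zero, dotProduct_comm,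
    Nat.ModEq] at h
  have := hD _ hz
  rw [Nat.ModEq]
  lia

theorem four_dvd_wt_iff_mem_of_mem_neighbor (hD : ∀ c ∈ D, 4 ∣ wt c) (hx : wt x % 4 = 2)
    (hz : z ∈ neighbor D x) : 4 ∣ wt z ↔ z ∈ D := by
  obtain ⟨hzD, hxz⟩ := mem_neighbor_iff.1 hz
  refine ⟨fun h4 => hzD.resolve_right fun h => ?_, hD z⟩
  have h := wt_modEq_of_add_mem hD hx h
  rw [hxz, ZMod.val_zero, Nat.ModEq] at h
  lia

theorem mem_shadow_neighbor_iff (hD : IsSelfDual D) (hD4 : ∀ c ∈ D, 4 ∣ wt c)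
    (hx : wt x % 4 = 2) :
    z ∈ shadow (neighbor D x) ↔ (z ∈ D ∨ z + x ∈ D) ∧ x ⬝ᵥ z = 1 := by
  have evenSub_eq : evenSub (neighbor D x) = (D ⊓ dualCode (ZMod 2 ∙ x) : Submodule _ _) := by
    ext y
    constructor
    · rintro ⟨hy, hy4⟩
      exact ⟨(four_dvd_wt_iff_mem_of_mem_neighbor hD4 hx hy).1 hy4, hy.2⟩
    · rintro ⟨hy, hxy⟩
      exact ⟨⟨Submodule.mem_sup_left hy, hxy⟩, hD4 y hy⟩
  rw [mem_shadow_iff, evenSub_eq, hD.dualSet_inf_dualCode_span, SetLike.mem_coe,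
    mem_neighbor_iff, mem_sup_span_singleton_iff]
  have ne_zero_iff : x ⬝ᵥ z ≠ 0 ↔ x ⬝ᵥ z = 1 := ⟨Fin.eq_one_of_ne_zero _, fun h => by simp [h]⟩
  tauto

theorem four_dvd_wt_of_mem_shadow_neighbor (hD : IsSelfDual D) (hD4 : ∀ c ∈ D, 4 ∣ wt c)
    (hx : wt x % 4 = 2) (hz : z ∈ shadow (neighbor D x)) : 4 ∣ wt z := by
  obtain ⟨hzD | hzD, hxz⟩ := (mem_shadow_neighbor_iff hD hD4 hx).1 hz
  · exact hD4 z hzD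
  · have h := wt_modEq_of_add_mem hD4 hx hzD
    rw [hxz, ZMod.val_one, Nat.ModEq] at h
    lia

end Shadow

section Extremal

section AnyLength

variable {n r : ℕ} {C : Submodule (ZMod 2) (Fin n → ZMod 2)} {t x y : Fin n → ZMod 2}

theorem IsSelfDual.wt_add_le_of_ne_one (hC : IsSelfDual C) (hmin : ∀ c ∈ C, c ≠ 0 → r ≤ wt c)
    (hy : y ∈ C) (hy1 : y ≠ 1) : wt y + r ≤ n := by
  have complement_ne_zero : y + 1 ≠ 0 := by
    rwa [← ZModModule.sub_eq_add, sub_ne_zero]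
  have h := hmin _ (C.add_mem hy hC.one_mem) complement_ne_zero
  have := wt_add_one_add_wt y
  lia

theorem coveringRadius_le_of_doublyEven (hC : IsSelfDual C) (hC4 : ∀ c ∈ C, 4 ∣ wt c)
    (hr : 4 ∣ r) (hmin : ∀ c ∈ C, c ≠ 0 → r ≤ wt c) :
    coveringRadius (C : Set (Fin n → ZMod 2)) ≤ (n - 2 * r) / 4 + 2 := by
  classical
  refine (coveringRadius_le_externalDistance C).trans ?_
  rw [externalDistance, isSelfDual_iff_dualCode_eq.1 hC]
  have weights_subset : image wt {y | y ∈ C ∧ y ≠ 0} ⊆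
      insert n ((Icc (r / 4) ((n - r) / 4)).image (4 * ·)) := by
    intro w hw
    obtain ⟨y, hy, rfl⟩ := mem_image.1 hw
    obtain ⟨hyC, hy0⟩ := (mem_filter.1 hy).2
    rcases eq_or_ne y 1 with rfl | hy1
    · rw [wt_one]
      exact mem_insert_self _ _
    · obtain ⟨b, hb⟩ := hC4 y hyC
      have := hmin y hyC hy0
      have := hC.wt_add_le_of_ne_one hmin hyC hy1
      exact mem_insert_of_mem (mem_image.2 ⟨b, mem_Icc.2 ⟨by lia, by lia⟩, hb.symm⟩)
  calc _ ≤ _ := card_le_card weights_subset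
    _ ≤ _ := card_insert_le _ _
    _ ≤ #(Icc (r / 4) ((n - r) / 4)) + 1 := Nat.add_le_add_right card_image_le 1
    _ ≤ (n - 2 * r) / 4 + 2 := by rw [Nat.card_Icc]; lia

theorem minWt_neighbor_of_mem_shadow (hC : IsSelfDual C) (hr : r ≠ 0) (hr4 : 4 ∣ r)
    (hmin : ∀ c ∈ C, c ≠ 0 → r < wt c + 4) (hshadow : ∀ c ∈ shadow C, c ≠ 0 → r ≤ wt c)
    (ht : t ∈ shadow C) (ht_wt : wt t = r) : minWt (neighbor C t) = r := by
  refine (minWtSet_eq_iff hr).2 ⟨fun y hy hy0 => ?_, t, mem_neighbor_self (by lia), ht_wt⟩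
  have hy4 := four_dvd_wt_of_mem_neighbor_shadow hC ht (by lia) hy
  obtain ⟨hyC | hyC, -⟩ := mem_neighbor_iff.1 hy
  · have := hmin y hyC hy0
    lia
  · exact hshadow y ((mem_shadow_iff_add_mem hC ht).2 hyC) hy0

theorem minWt_neighbor_of_coset_leader (hr : r ≠ 0) (hr2 : 2 ∣ r)
    (hmin : ∀ c ∈ C, c ≠ 0 → r ≤ wt c) (hx_wt : wt x = r) (hx : ∀ c ∈ C, r ≤ wt (x + c)) :
    minWt (neighbor C x) = r := by
  refine (minWtSet_eq_iff hr).2 ⟨fun z hz hz0 => ?_, x, mem_neighbor_self (by lia), hx_wt⟩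
  obtain ⟨hzC | hzC, -⟩ := mem_neighbor_iff.1 hz
  · exact hmin z hzC hz0
  · have h := hx _ hzC
    rwa [add_left_comm, ZModModule.add_self, add_zero] at h

end AnyLength

variable {k : ℕ} {C D : Submodule (ZMod 2) (Fin (24 * k + 8) → ZMod 2)}
  {t x : Fin (24 * k + 8) → ZMod 2}

theorem exists_wt_eq_of_forall_le_wt_add (hD : IsSelfDual D) (hD4 : ∀ c ∈ D, 4 ∣ wt c)
    (hmin : ∀ c ∈ D, c ≠ 0 → 4 * k + 4 ≤ wt c) (hx2 : 2 ∣ wt x)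
    (hx : ∀ c ∈ D, 4 * k < wt (x + c)) :
    ∃ y ∈ D, x ⬝ᵥ y = 1 ∧ wt y = 4 * k + 4 := by
  obtain ⟨K, hK, K_pos⟩ := exists_kernel_inverse (R := ℤ) (4 * k)
  obtain ⟨y, hy, hxy, hcoeff⟩ := exists_mem_dualCode_coeff_ne_zero (m := 4 * k) (K_pos _).ne'
    (fun c hc hc0 => (by lia : 4 * k < 4 * k + 4).trans_le (hmin c hc hc0)) hx
  rw [isSelfDual_iff_dualCode_eq.1 hD] at hy
  refine ⟨y, hy, hxy, ?_⟩
  have hy0 : y ≠ 0 := by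
    rintro rfl
    simp at hxy
  have hy1 : y ≠ 1 := by
    rintro rfl
    rw [(dotProduct_one_eq_zero_iff_two_dvd_wt x).2 hx2] at hxy
    exact zero_ne_one hxy
  have wt_ge := hmin y hy hy0
  have wt_le := hD.wt_add_le_of_ne_one hmin hy hy1
  obtain ⟨b, hb⟩ := hD4 y hy
  contrapose! hcoeff with wt_ne
  obtain ⟨j, hj⟩ : ∃ j, wt y = 4 * j + 4 * k + 8 := ⟨b - k - 2, by lia⟩
  obtain ⟨i, hi⟩ : ∃ i, i + j + 1 = 4 * k := ⟨4 * k - j - 1, by lia⟩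
  rw [show 24 * k + 8 - wt y = 4 * i + 4 * k + 4 by lia, hj]
  exact coeff_one_add_X_pow_mul_one_sub_X_pow_mul_kernel_eq_zero hi hK

theorem coveringRadius_neighbor_of_mem_shadow (hC : IsSinglyEvenSelfDual C)
    (hmin : ∀ c ∈ C, c ≠ 0 → 4 * k + 2 ≤ wt c)
    (hshadow : ∀ c ∈ shadow C, c ≠ 0 → 4 * k + 4 ≤ wt c) (ht : t ∈ shadow C)
    (ht_wt : wt t = 4 * k + 4) :
    coveringRadius (neighbor C t : Set (Fin (24 * k + 8) → ZMod 2)) = 4 * k + 2 := by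
  obtain ⟨hC, w, hw, hw4⟩ := hC
  have doubly_even : ∀ y ∈ neighbor C t, 4 ∣ wt y :=
    fun y => four_dvd_wt_of_mem_neighbor_shadow hC ht (by lia)
  have minWt_eq : minWt (neighbor C t) = 4 * k + 4 :=
    minWt_neighbor_of_mem_shadow hC (by lia) (by lia)
      (fun c hc hc0 => by have := hmin c hc hc0; lia) hshadow ht ht_wt
  have radius_le := coveringRadius_le_of_doublyEven (hC.neighbor (by lia)) doubly_even (by lia)
    ((minWtSet_eq_iff (by lia)).1 minWt_eq).1
  refine le_antisymm (by lia) (lt_coveringRadius_iff.2 ⟨w, fun y hy => ?_⟩)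
  have hwy0 : w + y ≠ 0 := by
    rw [← ZModModule.sub_eq_add, sub_ne_zero]
    rintro rfl
    exact hw4 (doubly_even w hy)
  obtain ⟨hyC | hyC, -⟩ := mem_neighbor_iff.1 hy
  · exact hmin _ (C.add_mem hw hyC) hwy0
  · have h := hshadow (w + y) ((mem_shadow_iff_add_mem hC ht).2 ?_) hwy0
    · lia
    · rw [add_assoc]
      exact C.add_mem hw hyC

theorem minWtSet_shadow_neighbor_of_coset_leader (hD : IsSelfDual D) (hD4 : ∀ c ∈ D, 4 ∣ wt c)
    (hmin : ∀ c ∈ D, c ≠ 0 → 4 * k + 4 ≤ wt c) (hx_wt : wt x = 4 * k + 2)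
    (hx : ∀ c ∈ D, 4 * k + 2 ≤ wt (x + c)) :
    minWtSet (shadow (neighbor D x)) = 4 * k + 4 := by
  have hx4 : wt x % 4 = 2 := by lia
  refine (minWtSet_eq_iff (by lia)).2 ⟨fun z hz hz0 => ?_, ?_⟩
  · have hz4 := four_dvd_wt_of_mem_shadow_neighbor hD hD4 hx4 hz
    obtain ⟨hzD | hzD, -⟩ := (mem_shadow_neighbor_iff hD hD4 hx4).1 hz
    · exact hmin z hzD hz0
    · have h := hx _ hzD
      rw [add_left_comm, ZModModule.add_self, add_zero] at h
      lia
  · obtain ⟨y, hy, hxy, hy_wt⟩ := exists_wt_eq_of_forall_le_wt_add hD hD4 hmin (by lia)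
      (fun c hc => (by lia : 4 * k < 4 * k + 2).trans_le (hx c hc))
    exact ⟨y, (mem_shadow_neighbor_iff hD hD4 hx4).2 ⟨.inl hy, hxy⟩, hy_wt⟩

theorem isSExtremal_neighbor_of_coset_leader (hD : IsSelfDual D) (hD4 : ∀ c ∈ D, 4 ∣ wt c)
    (hmin : ∀ c ∈ D, c ≠ 0 → 4 * k + 4 ≤ wt c) (hx_wt : wt x = 4 * k + 2)
    (hx : ∀ c ∈ D, 4 * k + 2 ≤ wt (x + c)) : IsSExtremal (neighbor D x) := by
  have minWt_eq := minWt_neighbor_of_coset_leader (by lia) (by lia)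
    (fun c hc hc0 => by have := hmin c hc hc0; lia) hx_wt hx
  obtain ⟨z, hz, hz_wt⟩ := ((minWtSet_eq_iff (by lia)).1 minWt_eq).2
  refine ⟨⟨hD.neighbor (by lia), z, hz, by lia⟩, ?_⟩
  rw [minWtSet_shadow_neighbor_of_coset_leader hD hD4 hmin hx_wt hx, minWt_eq]
  lia

end Extremal

/-- There exists an s-extremal singly even self-dual `[24k+8, 12k+4, 4k+2]` code if and
only if there exists a doubly even self-dual `[24k+8, 12k+4, 4k+4]` code with covering
radius `4k+2`. -/
theorem sExtremal_iff_coveringRadius (k : ℕ) :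
    (∃ C : Submodule (ZMod 2) (Fin (24 * k + 8) → ZMod 2),
      IsSExtremal C ∧ Module.finrank (ZMod 2) C = 12 * k + 4 ∧ minWt C = 4 * k + 2) ↔
    (∃ D : Submodule (ZMod 2) (Fin (24 * k + 8) → ZMod 2),
      IsSelfDual D ∧ (∀ x ∈ D, 4 ∣ wt x) ∧
      Module.finrank (ZMod 2) D = 12 * k + 4 ∧ minWt D = 4 * k + 4 ∧
      coveringRadius (D : Set (Fin (24 * k + 8) → ZMod 2)) = 4 * k + 2) := by
  constructor
  · rintro ⟨C, ⟨hC, hshadow⟩, -, hmin⟩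
    have hshadow_min : minWtSet (shadow C) = 4 * k + 4 := by lia
    obtain ⟨hmin_le, -⟩ := (minWtSet_eq_iff (by lia)).1 hmin
    obtain ⟨hshadow_le, t, ht, ht_wt⟩ := (minWtSet_eq_iff (by lia)).1 hshadow_min
    have hD : IsSelfDual (neighbor C t) := hC.1.neighbor (by lia)
    have hfinrank := hD.two_mul_finrank
    exact ⟨neighbor C t, hD, fun y => four_dvd_wt_of_mem_neighbor_shadow hC.1 ht (by lia), by lia,
      minWt_neighbor_of_mem_shadow hC.1 (by lia) (by lia)
        (fun c hc hc0 => by have := hmin_le c hc hc0; lia) hshadow_le ht ht_wt,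
      coveringRadius_neighbor_of_mem_shadow hC hmin_le hshadow_le ht ht_wt⟩
  · rintro ⟨D, hD, hD4, -, hmin, hradius⟩
    obtain ⟨x, hx_wt, hx⟩ := exists_coset_leader_of_coveringRadius_eq hradius
    obtain ⟨hmin_le, -⟩ := (minWtSet_eq_iff (by lia)).1 hmin
    have hC := isSExtremal_neighbor_of_coset_leader hD hD4 hmin_le hx_wt hx
    have hfinrank := hC.1.1.two_mul_finrank
    exact ⟨neighbor D x, hC, by lia, minWt_neighbor_of_coset_leader (by lia) (by lia)
      (fun c hc hc0 => by have := hmin_le c hc hc0; lia) hx_wt hx⟩
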